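/- arXiv:2107.07815 — 2 statements merged into one kernel-verified Lean document; each statement's English description precedes it below -/
import Mathlib

section
/- Suppose the discount function satisfies f(i) = 1 for all 1 ≤ i ≤ k and f(i) = 0 for all i > k, and all edge weights are strictly positive. Then there exists an ordering d with val(d) = Σ_{e∈E} w(e) (the total edge weight) if and only if G has bandwidth at most k, i.e., there exists an ordering d such that |d(u)−d(v)| ≤ k for every edge {u,v} ∈ E. Moreover, val(d) ≤ Σ_{e∈E} w(e) for every ordering d. -/
/-!
Distinct vertices are at distance at least `1`, where the discount is at most `1`. Each edge
therefore contributes at most its weight to the value of an ordering, and exactly its weight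
precisely when its length is at most `k`, since weights are positive. A sum of termwise
inequalities is an equality only if every term is.
-/

section WeightedSums

variable {ι R : Type*} [Semiring R] [PartialOrder R] {s : Finset ι} {c w : ι → R}

theorem sum_mul_le_sum_of_le_one [IsOrderedRing R] (hw : ∀ i ∈ s, 0 ≤ w i)
    (hc : ∀ i ∈ s, c i ≤ 1) :
    ∑ i ∈ s, c i * w i ≤ ∑ i ∈ s, w i :=
  Finset.sum_le_sum fun i hi => mul_le_of_le_one_left (hw i hi) (hc i hi)

theorem sum_mul_eq_sum_iff_of_le_one [IsStrictOrderedRing R] (hw : ∀ i ∈ s, 0 < w i)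
    (hc : ∀ i ∈ s, c i ≤ 1) :
    ∑ i ∈ s, c i * w i = ∑ i ∈ s, w i ↔ ∀ i ∈ s, c i = 1 := by
  rw [Finset.sum_eq_sum_iff_of_le fun i hi => mul_le_of_le_one_left (hw i hi).le (hc i hi)]
  refine forall₂_congr fun i hi => ⟨fun h => ?_, fun h => by rw [h, one_mul]⟩
  exact (hc i hi).eq_of_not_lt fun hlt => (mul_lt_of_lt_one_left (hw i hi) hlt).ne h

end WeightedSums

theorem sum_sum_ite_eq_sum_filter {α β M : Type*} [Fintype α] [Fintype β] [AddCommMonoid M]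
    (r : α → β → Prop) [∀ a b, Decidable (r a b)] (g : α → β → M) :
    (∑ a, ∑ b, if r a b then g a b else 0) = ∑ p : α × β with r p.1 p.2, g p.1 p.2 := by
  rw [Finset.sum_filter, Fintype.sum_prod_type]

section ExtTSP

variable {V R : Type*} [Field R]

/-- The Ext-TSP value of a layout `d` of the vertices of `G` at integer positions, with weights
`w` and discount function `f`. The factor `1 / 2` compensates for summing over ordered pairs. For
asymmetric `w`, an edge is weighted by the average over its two orientations. -/
def extTSPValue [Fintype V] (G : SimpleGraph V) [DecidableRel G.Adj] (w : V → V → R) (f : ℕ → R)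
    (d : V → ℕ) : R :=
  (1 / 2) * ∑ u, ∑ v, if G.Adj u v then f (Nat.dist (d u) (d v)) * w u v else 0

/-- The total edge weight of `G`, with the same convention on ordered pairs as `extTSPValue`. -/
def totalEdgeWeight [Fintype V] (G : SimpleGraph V) [DecidableRel G.Adj] (w : V → V → R) : R :=
  (1 / 2) * ∑ u, ∑ v, if G.Adj u v then w u v else 0

/-- The layout `d` stretches no edge of `G` beyond length `k`. Over bijections of `V` onto an
interval, the least such `k` is the bandwidth of `G`. -/
def LayoutWidthLE (G : SimpleGraph V) (d : V → ℕ) (k : ℕ) : Prop :=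
  ∀ u v, G.Adj u v → Nat.dist (d u) (d v) ≤ k

theorem one_le_dist_of_adj {G : SimpleGraph V} {d : V → ℕ} (hd : d.Injective) {u v : V}
    (h : G.Adj u v) : 1 ≤ Nat.dist (d u) (d v) :=
  Nat.dist_pos_of_ne (hd.ne h.ne)

variable [LinearOrder R] [IsStrictOrderedRing R] [Fintype V] {G : SimpleGraph V}
  [DecidableRel G.Adj] {w : V → V → R} {f : ℕ → R} {d : V → ℕ}

theorem extTSPValue_le_totalEdgeWeight (hw : ∀ u v, G.Adj u v → 0 ≤ w u v)
    (hf : ∀ i, 1 ≤ i → f i ≤ 1) (hd : d.Injective) :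
    extTSPValue G w f d ≤ totalEdgeWeight G w := by
  unfold extTSPValue totalEdgeWeight
  rw [mul_le_mul_iff_right₀ one_half_pos, sum_sum_ite_eq_sum_filter, sum_sum_ite_eq_sum_filter]
  exact sum_mul_le_sum_of_le_one (by simpa using hw)
    (by simpa using fun u v h => hf _ (one_le_dist_of_adj hd h))

theorem extTSPValue_eq_totalEdgeWeight_iff (hw : ∀ u v, G.Adj u v → 0 < w u v)
    (hf : ∀ i, 1 ≤ i → f i ≤ 1) (hd : d.Injective) :
    extTSPValue G w f d = totalEdgeWeight G w ↔
      ∀ u v, G.Adj u v → f (Nat.dist (d u) (d v)) = 1 := by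
  unfold extTSPValue totalEdgeWeight
  rw [mul_right_inj' one_half_pos.ne', sum_sum_ite_eq_sum_filter, sum_sum_ite_eq_sum_filter,
    sum_mul_eq_sum_iff_of_le_one (by simpa using hw)
      (by simpa using fun u v h => hf _ (one_le_dist_of_adj hd h))]
  simp only [Finset.mem_filter_univ, Prod.forall]

theorem extTSP_total_weight_iff_bandwidth_general {k : ℕ} (hw : ∀ u v, G.Adj u v → 0 < w u v)
    (hf_one : ∀ i, 1 ≤ i → i ≤ k → f i = 1) (hf_lt_one : ∀ i, k < i → f i < 1)
    (hd : d.Injective) :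
    (extTSPValue G w f d = totalEdgeWeight G w ↔ LayoutWidthLE G d k) ∧
      extTSPValue G w f d ≤ totalEdgeWeight G w := by
  have hf_le (i : ℕ) (hi : 1 ≤ i) : f i ≤ 1 :=
    (le_or_gt i k).elim (fun h => (hf_one i hi h).le) fun h => (hf_lt_one i h).le
  have hf_eq_iff (i : ℕ) (hi : 1 ≤ i) : f i = 1 ↔ i ≤ k :=
    ⟨fun h => not_lt.1 fun hk => (hf_lt_one i hk).ne h, hf_one i hi⟩
  refine ⟨?_, extTSPValue_le_totalEdgeWeight (fun u v h => (hw u v h).le) hf_le hd⟩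
  rw [extTSPValue_eq_totalEdgeWeight_iff hw hf_le hd]
  exact forall₃_congr fun u v h => hf_eq_iff _ (one_le_dist_of_adj hd h)

end ExtTSP

/-- With the step discount function (`f i = 1` for `1 ≤ i ≤ k`, `f i = 0`
for `i > k`) and strictly positive edge weights, some ordering attains the total edge weight
if and only if the graph has bandwidth at most `k`; moreover every ordering has value at most
the total edge weight. -/
theorem extTSP_total_weight_iff_bandwidth {V : Type} [Fintype V] [DecidableEq V]
    (G : SimpleGraph V) [DecidableRel G.Adj]
    (w : V → V → ℝ) (hw_symm : ∀ u v, w u v = w v u)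
    (hw_pos : ∀ u v, G.Adj u v → 0 < w u v)
    (k : ℕ) (hk : 1 ≤ k)
    (f : ℕ → ℝ) (hf_one : ∀ i, 1 ≤ i → i ≤ k → f i = 1)
    (hf_zero : ∀ i, k < i → f i = 0) :
    ((∃ d : V ≃ Fin (Fintype.card V),
        (1 / 2) * (∑ u : V, ∑ v : V,
            if G.Adj u v then f (Nat.dist (d u) (d v)) * w u v else 0)
          = (1 / 2) * (∑ u : V, ∑ v : V, if G.Adj u v then w u v else 0)) ↔
      (∃ d : V ≃ Fin (Fintype.card V),
        ∀ u v : V, G.Adj u v → Nat.dist (d u) (d v) ≤ k)) ∧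
    (∀ d : V ≃ Fin (Fintype.card V),
      (1 / 2) * (∑ u : V, ∑ v : V,
          if G.Adj u v then f (Nat.dist (d u) (d v)) * w u v else 0)
        ≤ (1 / 2) * (∑ u : V, ∑ v : V, if G.Adj u v then w u v else 0)) := by
  have key (d : V ≃ Fin (Fintype.card V)) :=
    extTSP_total_weight_iff_bandwidth_general hw_pos hf_one
      (fun i hi => (hf_zero i hi).trans_lt one_pos) (Fin.val_injective.comp d.injective)
  exact ⟨exists_congr fun d => (key d).1, fun d => (key d).2⟩
end

section
/- For every ordering d of V and all integers 1 ≤ a ≤ b, there exists a subset B ⊆ E such that every vertex is incident to at most 2 edges of B and Σ_{e∈B} w(e) ≥ (1/(b−a+1)) · Σ w(u,v), where the latter sum is over edges {u,v} ∈ E with a ≤ |d(u)−d(v)| ≤ b. -/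
/-! Split the edges of the band by the distance of their endpoints in the ordering. A vertex has at
most two vertices at any given distance, one on each side, so each of the `b - a + 1` classes is a
2-matching; the heaviest class weighs at least the average. -/

open Finset

section EdgeSums

variable {V M : Type*} [Fintype V] [AddCommMonoid M] (G : SimpleGraph V) [DecidableRel G.Adj]

theorem sum_sum_ite_adj_eq_sum_dart (f : V → V → M) :
    ∑ u, ∑ v, (if G.Adj u v then f u v else 0) = ∑ e : G.Dart, f e.fst e.snd := by
  rw [← Fintype.sum_prod_type' (fun u v => if G.Adj u v then f u v else 0), ← sum_filter]
  exact sum_bij' (fun p hp => ⟨p, (mem_filter.mp hp).2⟩) (fun e _ => e.toProd)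
    (by simp) (by simp) (by simp) (by simp) (by simp)

theorem sum_dart_edge_eq_two_nsmul_sum_edgeFinset (F : Sym2 V → M) :
    ∑ e : G.Dart, F e.edge = 2 • ∑ e ∈ G.edgeFinset, F e := by
  classical
  have edge_mem : ∀ e ∈ (univ : Finset G.Dart), e.edge ∈ G.edgeFinset := by simp
  rw [← sum_fiberwise_of_maps_to' edge_mem, smul_sum]
  refine sum_congr rfl fun e he => ?_
  rw [sum_const, G.dart_edge_fiber_card e (SimpleGraph.mem_edgeFinset.mp he)]

theorem sum_sum_ite_adj_eq_two_nsmul_sum_edgeFinset (F : Sym2 V → M) :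
    ∑ u, ∑ v, (if G.Adj u v then F s(u, v) else 0) = 2 • ∑ e ∈ G.edgeFinset, F e :=
  (sum_sum_ite_adj_eq_sum_dart G fun u v => F s(u, v)).trans
    (sum_dart_edge_eq_two_nsmul_sum_edgeFinset G F)

end EdgeSums

theorem eq_sub_or_eq_add_of_natDist_eq {x y i : ℕ} (h : Nat.dist x y = i) :
    y = x - i ∨ y = x + i := by
  unfold Nat.dist at h
  omega

section OrderingDist

variable {V : Type*}

/-- The distance `|d(u) - d(v)|` between the endpoints of an unordered pair `{u, v}` of vertices
placed at the positions `d`. -/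
def orderingDist (d : V → ℕ) : Sym2 V → ℕ :=
  Sym2.lift ⟨fun u v => Nat.dist (d u) (d v), fun _ _ => Nat.dist_comm _ _⟩

@[simp]
theorem orderingDist_mk (d : V → ℕ) (u v : V) :
    orderingDist d s(u, v) = Nat.dist (d u) (d v) := rfl

theorem card_filter_mem_le_two_of_orderingDist_eq [DecidableEq V] {d : V → ℕ}
    (hd : d.Injective) {S : Finset (Sym2 V)} {i : ℕ} (hS : ∀ e ∈ S, orderingDist d e = i) (v : V) :
    #{e ∈ S | v ∈ e} ≤ 2 := by
  let N : Finset V := ({d v - i, d v + i} : Finset ℕ).preimage d hd.injOn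
  have hcover : {e ∈ S | v ∈ e} ⊆ N.image fun u => s(v, u) := by
    intro e he
    obtain ⟨heS, u, rfl⟩ := mem_filter.mp he
    have hu : d u = d v - i ∨ d u = d v + i := eq_sub_or_eq_add_of_natDist_eq (hS _ heS)
    exact mem_image_of_mem _ (by simpa [N] using hu)
  calc #{e ∈ S | v ∈ e} ≤ #N := (card_le_card hcover).trans card_image_le
    _ ≤ #({d v - i, d v + i} : Finset ℕ) :=
      card_le_card_of_injOn d (fun _ hu => mem_preimage.mp hu) hd.injOn
    _ ≤ 2 := card_le_two

end OrderingDist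

theorem half_sum_sum_ite_band_eq_sum_edgeFinset {V K : Type*} [Fintype V] [DivisionSemiring K]
    [NeZero (2 : K)] (G : SimpleGraph V) [DecidableRel G.Adj] (d : V → ℕ) (w : V → V → K)
    (hw_symm : ∀ u v, w u v = w v u) (a b : ℕ) :
    (1 / 2) * ∑ u, ∑ v,
        (if G.Adj u v ∧ a ≤ Nat.dist (d u) (d v) ∧ Nat.dist (d u) (d v) ≤ b then w u v else 0) =
      ∑ e ∈ G.edgeFinset with orderingDist d e ∈ Icc a b, Sym2.lift ⟨w, hw_symm⟩ e := by
  have hsum := sum_sum_ite_adj_eq_two_nsmul_sum_edgeFinset G fun e =>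
    if orderingDist d e ∈ Icc a b then Sym2.lift ⟨w, hw_symm⟩ e else 0
  simp only [orderingDist_mk, mem_Icc, Sym2.lift_mk, ← ite_and, nsmul_eq_mul, Nat.cast_ofNat]
    at hsum
  simp only [hsum, sum_filter, mem_Icc]
  rw [one_div, inv_mul_cancel_left₀ two_ne_zero]

theorem extTSP_band_two_matching_general {V K : Type*} [Fintype V] [DecidableEq V]
    [Field K] [LinearOrder K] [IsStrictOrderedRing K] (G : SimpleGraph V) [DecidableRel G.Adj]
    (w : V → V → K) (hw_symm : ∀ u v, w u v = w v u)
    (a b : ℕ) (hab : a ≤ b) (d : V → ℕ) (hd : d.Injective) :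
    ∃ B : Finset (Sym2 V), B ⊆ G.edgeFinset ∧
      (∀ v : V, (B.filter (fun e => v ∈ e)).card ≤ 2) ∧
      ∑ e ∈ B, Sym2.lift ⟨w, hw_symm⟩ e ≥
        (1 / ((b : K) - (a : K) + 1)) *
          ((1 / 2) * ∑ u : V, ∑ v : V,
            if G.Adj u v ∧ a ≤ Nat.dist (d u) (d v) ∧ Nat.dist (d u) (d v) ≤ b
            then w u v else 0) := by
  rw [half_sum_sum_ite_band_eq_sum_edgeFinset G d w hw_symm]
  let band : Finset (Sym2 V) := {e ∈ G.edgeFinset | orderingDist d e ∈ Icc a b}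
  have hcard : (#(Icc a b) : K) = b - a + 1 := by
    rw [Nat.card_Icc, Nat.sub_add_comm hab, Nat.cast_add_one, Nat.cast_sub hab]
  have hcard_ne : (#(Icc a b) : K) ≠ 0 := Nat.cast_ne_zero.mpr (nonempty_Icc.mpr hab).card_ne_zero
  have haverage : #(Icc a b) • (1 / ((b : K) - a + 1) * ∑ e ∈ band, Sym2.lift ⟨w, hw_symm⟩ e) =
      ∑ e ∈ band, Sym2.lift ⟨w, hw_symm⟩ e := by
    rw [nsmul_eq_mul, ← hcard, one_div, mul_inv_cancel_left₀ hcard_ne]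
  obtain ⟨i, -, hi⟩ := exists_le_sum_fiber_of_maps_to_of_nsmul_le_sum
    (f := orderingDist d) (fun _ he => (mem_filter.mp he).2) (nonempty_Icc.mpr hab) haverage.le
  exact ⟨{e ∈ band | orderingDist d e = i}, (filter_subset _ _).trans (filter_subset _ _),
    card_filter_mem_le_two_of_orderingDist_eq hd fun _ he => (mem_filter.mp he).2, hi⟩

/-- For every ordering `d` and integers `1 ≤ a ≤ b`, there is a simple
2-matching `B ⊆ E` whose weight is at least `1/(b-a+1)` times the total weight of the edges
whose endpoints are at distance between `a` and `b` in the ordering. -/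
theorem extTSP_band_two_matching {V : Type} [Fintype V] [DecidableEq V]
    (G : SimpleGraph V) [DecidableRel G.Adj]
    (w : V → V → ℝ) (hw_symm : ∀ u v, w u v = w v u)
    (hw_pos : ∀ u v, G.Adj u v → 0 < w u v)
    (a b : ℕ) (ha : 1 ≤ a) (hab : a ≤ b)
    (d : V ≃ Fin (Fintype.card V)) :
    ∃ B : Finset (Sym2 V), B ⊆ G.edgeFinset ∧
      (∀ v : V, (B.filter (fun e => v ∈ e)).card ≤ 2) ∧
      ∑ e ∈ B, Sym2.lift ⟨w, hw_symm⟩ e ≥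
        (1 / ((b : ℝ) - (a : ℝ) + 1)) *
          ((1 / 2) * ∑ u : V, ∑ v : V,
            if G.Adj u v ∧ a ≤ Nat.dist (d u) (d v) ∧ Nat.dist (d u) (d v) ≤ b
            then w u v else 0) :=
  extTSP_band_two_matching_general G w hw_symm a b hab (fun v => d v)
    (Fin.val_injective.comp d.injective)
end
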